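/- arXiv:2602.08532 — 8 statements merged into one kernel-verified Lean document; each statement's English description precedes it below -/
import Mathlib

section
/- Let L, L₁, L₂ be first-order languages with L₁ and L₂ sharing exactly the symbols of L, let T be a set of L-sentences (a first-order theory), let A be a sentence over the sum language L ⊕ L₁ and B a sentence over the sum language L ⊕ L₂, all viewed as sentences over the combined language (L ⊕ L₁) ⊕ L₂ via the canonical language embeddings. If the set consisting of the (lifted) sentences of T together with A and B has no model, then there exists an L-sentence I such that every model of T together with A satisfies (the lift of) I, and the set consisting of T, (the lift of) I, and B has no model. -/
open FirstOrder FirstOrder.Language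

/-!
The theorem is Craig interpolation modulo `T`, obtained from a Henkin construction carried out
simultaneously in the two languages `P = L ⊕ L₁` and `Q = L ⊕ L₂`.

The Henkin constants are represented by free variables from a type `V`. Every formula `φ(x)` of
`P` or of `Q` with parameters in `V` is assigned its own witness `wt φ : V`, of a level strictly
above the levels of the variables of `φ` (`exists_witnesses`). The variables are common to both
sides, so a separator of the two theories enlarged by Henkin axioms `(∃ x, φ x) → φ (wt φ)` is an
`L`-formula with variables in `V`. Adding finitely many Henkin axioms creates no new separators:
the witness `c` of the axiom of highest level is fresh, and if that axiom lies on the `P`-side, a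
separator `θ` may be replaced by `∃ c, θ`; the other side is dual (`Sep.to_empty`).

If the original theories have no separator, compactness therefore gives a model `M` of the
`P`-theory and a model `N` of the `Q`-theory, with valuations `V → M` and `V → N` that satisfy all
Henkin axioms and the same `L`-formulas (`exists_models`). By the Tarski–Vaught test the named
elements form elementary substructures (`exists_elementary`). Matching names identifies these two
substructures as `L`-structures, and hence yields a single structure for the combined language
(`exists_glue`), contradicting the unsatisfiability assumption.
-/

namespace TSeparator

universe p pr q qr u ur w z

/-! ### Compactness and Henkin axioms -/

/-- Compactness for sets of formulas in the free variables `V`. -/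
theorem exists_model_of_finite {P : FirstOrder.Language.{p, pr}} {V : Type w} (Γ : Set (P.Formula V))
    (h : ∀ F : Finset (P.Formula V), ↑F ⊆ Γ → ∃ (M : Type z) (_ : Nonempty M)
      (_ : P.Structure M) (v : V → M), ∀ γ ∈ F, γ.Realize v) :
    ∃ (M : Type (max p pr w)) (_ : Nonempty M) (_ : P.Structure M) (v : V → M),
      ∀ γ ∈ Γ, γ.Realize v := by
  classical
  have hsat : Theory.IsSatisfiable
      ((Formula.equivSentence : P.Formula V ≃ P[[V]].Sentence) '' Γ) := by
    rw [Theory.isSatisfiable_iff_isFinitelySatisfiable]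
    intro T0 hT0
    obtain ⟨F, hF, rfl⟩ := Finset.subset_set_image_iff.1 hT0
    obtain ⟨M, _, _, v, hv⟩ := h F hF
    let := constantsOn.structure v
    have : M ⊨ ((F.image Formula.equivSentence : Finset _) : P[[V]].Theory) := by
      refine ⟨fun φ hφ => ?_⟩
      obtain ⟨γ, hγ, rfl⟩ := Finset.mem_image.1 (Finset.mem_coe.1 hφ)
      exact (Formula.realize_equivSentence M γ).2 (hv γ hγ)
    exact Theory.Model.isSatisfiable M
  obtain ⟨M⟩ := hsat
  let : P.Structure M := (P.lhomWithConstants V).reduct M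
  refine ⟨M, inferInstance, inferInstance, fun a => (P.con a : M), fun γ hγ => ?_⟩
  exact (Formula.realize_equivSentence M γ).1
    (Theory.realize_sentence_of_mem _ (Set.mem_image_of_mem _ hγ))

/-- Under the valuation `v`, the variable `c` names a witness of `∃ x, φ(x)` if there is one. The
variable `x` is `Sum.inr ()`. -/
def Wit {P : FirstOrder.Language.{p, pr}} {V : Type w} {M : Type z}
    [P.Structure M] (v : V → M)
    (φ : P.Formula (V ⊕ Unit)) (c : V) : Prop :=
  ∀ m : M, φ.Realize (Sum.elim v fun _ => m) → φ.Realize (Sum.elim v fun _ => v c)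

/-- The Henkin axiom `(∃ x, φ(x)) → φ(c)`, where `x` is `Sum.inr ()`. -/
noncomputable def henkin {P : FirstOrder.Language.{p, pr}} {V : Type w}
    (φ : P.Formula (V ⊕ Unit)) (c : V) :
    P.Formula V :=
  (φ.iExs Unit).imp (φ.relabel (Sum.elim id fun _ => c))

theorem realize_henkin {P : FirstOrder.Language.{p, pr}} {V : Type w} {M : Type z}
    [P.Structure M] (v : V → M)
    (φ : P.Formula (V ⊕ Unit)) (c : V) : (henkin φ c).Realize v ↔ Wit v φ c := by
  have h : v ∘ (Sum.elim id fun _ : Unit => c) = Sum.elim v fun _ => v c := by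
    ext (x | x) <;> rfl
  rw [henkin, Formula.realize_imp, Formula.realize_iExs, Formula.realize_relabel, Wit,
    Sum.comp_elim] at *
  simp only [forall_exists_index]
  exact ⟨fun H m hm => H _ hm, fun H i hi => H (i ()) hi⟩

theorem realize_congr {P : FirstOrder.Language.{p, pr}} {V : Type w} {M : Type z} [P.Structure M]
    [DecidableEq V] (φ : P.Formula V) (v v' : V → M)
    (h : ∀ a ∈ BoundedFormula.freeVarFinset φ, v a = v' a) : φ.Realize v ↔ φ.Realize v' := by
  unfold Formula.Realize
  rw [← BoundedFormula.realize_restrictFreeVar (φ := φ) (f := fun a => a) (v := fun a => v a) v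
    (fun _ => rfl), ← BoundedFormula.realize_restrictFreeVar (φ := φ) (f := fun a => a)
    (v := fun a => v a) v' (fun a => h a a.2)]

theorem realize_update {P : FirstOrder.Language.{p, pr}} {V : Type w} {M : Type z} [P.Structure M]
    [DecidableEq V] (φ : P.Formula (V ⊕ Unit)) (v : V → M) (a : V) (m x : M)
    (h : Sum.inl a ∉ BoundedFormula.freeVarFinset φ) :
    φ.Realize (Sum.elim (Function.update v a m) fun _ => x) ↔
      φ.Realize (Sum.elim v fun _ => x) := by
  refine realize_congr _ _ _ ?_
  rintro (b | b) hb
  · have : b ≠ a := by rintro rfl; exact h hb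
    simp [this]
  · rfl

theorem Wit.update {P : FirstOrder.Language.{p, pr}} {V : Type w} {M : Type z} [P.Structure M]
    [DecidableEq V] {φ : P.Formula (V ⊕ Unit)} {v : V → M} {c : V} (H : Wit v φ c) {a : V} (m : M)
    (h : Sum.inl a ∉ BoundedFormula.freeVarFinset φ) (hca : c ≠ a) :
    Wit (Function.update v a m) φ c := by
  intro x hx
  rw [realize_update _ _ _ _ _ h] at hx ⊢
  rw [Function.update_of_ne hca]
  exact H x hx

/-- A Henkin axiom with a fresh witness `a` can be made true by changing the value of `a` only. -/
theorem exists_wit {P : FirstOrder.Language.{p, pr}} {V : Type w} {M : Type z} [P.Structure M]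
    [DecidableEq V] (φ : P.Formula (V ⊕ Unit)) (v : V → M) {a : V}
    (h : Sum.inl a ∉ BoundedFormula.freeVarFinset φ) :
    ∃ m, Wit (Function.update v a m) φ a := by
  by_cases hm : ∃ m, φ.Realize (Sum.elim v fun _ => m)
  · obtain ⟨m, hm⟩ := hm
    refine ⟨m, fun x _ => ?_⟩
    rw [realize_update _ _ _ _ _ h, Function.update_self]
    exact hm
  · refine ⟨v a, fun x hx => (hm ⟨x, ?_⟩).elim⟩
    rwa [realize_update _ _ _ _ _ h] at hx

/-- Existential quantification of the free variable `a`. -/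
noncomputable def exVar {L : FirstOrder.Language.{u, ur}} {V : Type w} [DecidableEq V] (a : V)
    (θ : L.Formula V) : L.Formula V :=
  (θ.relabel fun x => if x = a then Sum.inr () else Sum.inl x : L.Formula (V ⊕ Unit)).iExs Unit

theorem realize_exVar {L : FirstOrder.Language.{u, ur}} {P : FirstOrder.Language.{p, pr}}
    (f : L →ᴸ P) {V : Type w}
    [DecidableEq V] {M : Type z} [P.Structure M] (a : V) (θ : L.Formula V) (v : V → M) :
    (f.onFormula (exVar a θ)).Realize v ↔
      ∃ m, (f.onFormula θ).Realize (Function.update v a m) := by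
  let : L.Structure M := f.reduct M
  have h : ∀ m : Unit → M, Sum.elim v m ∘ (fun x => if x = a then Sum.inr () else Sum.inl x) =
      Function.update v a (m ()) := by
    intro m
    ext x
    by_cases hx : x = a
    · subst hx; simp
    · simp [hx]
  simp only [LHom.realize_onFormula, exVar, Formula.realize_iExs, Formula.realize_relabel, h]
  exact ⟨fun ⟨i, hi⟩ => ⟨i (), hi⟩, fun ⟨m, hm⟩ => ⟨fun _ => m, hm⟩⟩

theorem realize_on_not {L : FirstOrder.Language.{u, ur}} {P : FirstOrder.Language.{p, pr}}
    (f : L →ᴸ P) {V : Type w}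
    {M : Type z} [P.Structure M] (θ : L.Formula V) (v : V → M) :
    (f.onFormula θ.not).Realize v ↔ ¬ (f.onFormula θ).Realize v := by
  let : L.Structure M := f.reduct M
  simp only [LHom.realize_onFormula, Formula.realize_not]

theorem realize_on_iInf {L : FirstOrder.Language.{u, ur}} {P : FirstOrder.Language.{p, pr}}
    (f : L →ᴸ P) {V : Type w}
    {M : Type z} [P.Structure M] (S : Finset (L.Formula V)) (v : V → M) :
    (f.onFormula (Formula.iInf fun θ : S => θ.1)).Realize v ↔
      ∀ θ ∈ S, (f.onFormula θ).Realize v := by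
  let : L.Structure M := f.reduct M
  simp only [LHom.realize_onFormula, Formula.realize_iInf, Subtype.forall]

/-- `θ` follows from `T` and the Henkin axioms of the formulas in `F`, the witness of `φ` being
`wt φ`. Only models in the universe `max p pr w` are considered; compactness produces models
there. -/
def Entails {P : FirstOrder.Language.{p, pr}} {V : Type w} (T : P.Theory) (wt : P.Formula (V ⊕ Unit) → V)
    (F : Set (P.Formula (V ⊕ Unit))) (θ : P.Formula V) : Prop :=
  ∀ (M : Type (max p pr w)) [Nonempty M] [P.Structure M] (v : V → M), M ⊨ T →
    (∀ φ ∈ F, Wit v φ (wt φ)) → θ.Realize v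

theorem exists_finset_lift {α : Type*} {β : Type*} (k : α → β) (s : Set α) (G : Finset β) :
    ∃ F : Finset α, ↑F ⊆ s ∧ ∀ b ∈ G, b ∈ k '' s → ∃ a ∈ F, k a = b := by
  classical
  obtain ⟨F, hF, hFG⟩ := Finset.subset_set_image_iff.1
    (show ((G.filter (· ∈ k '' s) : Finset β) : Set β) ⊆ k '' s from
      fun b hb => (Finset.mem_filter.1 (Finset.mem_coe.1 hb)).2)
  refine ⟨F, hF, fun b hb hbs => Finset.mem_image.1 ?_⟩
  rw [hFG]
  exact Finset.mem_filter.2 ⟨hb, hbs⟩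

/-- Compactness for `T`, all Henkin axioms and a set `Θ` of `L`-formulas: they have a common model
unless `T` and finitely many Henkin axioms refute a finite conjunction from `Θ`. -/
theorem exists_model {L : FirstOrder.Language.{u, ur}} {P : FirstOrder.Language.{p, pr}}
    (f : L →ᴸ P) {V : Type w}
    (T : P.Theory) (wt : P.Formula (V ⊕ Unit) → V) (Θ : Set (L.Formula V))
    (h : ∀ (F : Finset (P.Formula (V ⊕ Unit))) (S : Finset (L.Formula V)), ↑S ⊆ Θ →
      ¬ Entails T wt F (f.onFormula (Formula.iInf fun θ : S => θ.1).not)) :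
    ∃ (M : Type (max p pr w)) (_ : Nonempty M) (_ : P.Structure M) (v : V → M),
      M ⊨ T ∧ (∀ φ, Wit v φ (wt φ)) ∧ ∀ θ ∈ Θ, (f.onFormula θ).Realize v := by
  classical
  have key := exists_model_of_finite.{p, pr, w, max p pr w}
    ({γ : P.Formula V | ∃ τ ∈ T, γ = Formula.relabel Empty.elim τ} ∪
      (Set.range (fun φ : P.Formula (V ⊕ Unit) => henkin φ (wt φ)) ∪ f.onFormula '' Θ)) ?_
  · obtain ⟨M, hM, hs, v, hv⟩ := key
    refine ⟨M, hM, hs, v, ⟨fun τ hτ => ?_⟩, fun φ => ?_, fun θ hθ => ?_⟩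
    · have := hv _ (Or.inl ⟨τ, hτ, rfl⟩)
      rw [Formula.realize_relabel, Unique.eq_default (v ∘ Empty.elim)] at this
      exact this
    · exact (realize_henkin _ _ _).1 (hv _ (Or.inr (Or.inl ⟨φ, rfl⟩)))
    · exact hv _ (Or.inr (Or.inr ⟨θ, hθ, rfl⟩))
  · intro G hG
    obtain ⟨F, -, hF⟩ := exists_finset_lift
      (fun φ : P.Formula (V ⊕ Unit) => henkin φ (wt φ)) Set.univ G
    obtain ⟨S, hS, hSG⟩ := exists_finset_lift f.onFormula Θ G
    have := h F S hS
    simp only [Entails, realize_on_not, realize_on_iInf] at this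
    push Not at this
    obtain ⟨M, hM, hs, v, hT, hW, hθ⟩ := this
    refine ⟨M, hM, hs, v, fun γ hγ => ?_⟩
    rcases hG hγ with ⟨τ, hτ, rfl⟩ | h | h
    · rw [Formula.realize_relabel, Unique.eq_default (v ∘ Empty.elim)]
      exact Theory.realize_sentence_of_mem T hτ
    · obtain ⟨φ, hφ, rfl⟩ := hF γ hγ (by rwa [Set.image_univ])
      exact (realize_henkin _ _ _).2 (hW φ hφ)
    · obtain ⟨θ, hθS, rfl⟩ := hSG γ hγ h
      exact hθ θ hθS

/-! ### Separators and fresh witnesses -/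

section Sep

variable {L : FirstOrder.Language.{u, ur}} {P : FirstOrder.Language.{p, pr}}
  {Q : FirstOrder.Language.{q, qr}} {V : Type w}

/-- Some `L`-formula in the variables `V` separates the theories `TP` and `TQ`, each enlarged by
the Henkin axioms of those formulas of its language that lie in `F`. -/
def Sep (f : L →ᴸ P) (g : L →ᴸ Q) (TP : P.Theory) (TQ : Q.Theory)
    (wt : P.Formula (V ⊕ Unit) ⊕ Q.Formula (V ⊕ Unit) → V)
    (F : Set (P.Formula (V ⊕ Unit) ⊕ Q.Formula (V ⊕ Unit))) : Prop :=
  ∃ θ : L.Formula V, Entails TP (wt ∘ Sum.inl) (Sum.inl ⁻¹' F) (f.onFormula θ) ∧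
    Entails TQ (wt ∘ Sum.inr) (Sum.inr ⁻¹' F) (g.onFormula θ.not)

theorem Sep.symm {f : L →ᴸ P} {g : L →ᴸ Q} {TP : P.Theory} {TQ : Q.Theory}
    {wt : P.Formula (V ⊕ Unit) ⊕ Q.Formula (V ⊕ Unit) → V}
    {F : Set (P.Formula (V ⊕ Unit) ⊕ Q.Formula (V ⊕ Unit))} (h : Sep f g TP TQ wt F) :
    Sep g f TQ TP (wt ∘ Sum.swap) (Sum.swap ⁻¹' F) := by
  obtain ⟨θ, h1, h2⟩ := h
  refine ⟨θ.not, h2, ?_⟩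
  intro M _ _ v hT hW
  rw [realize_on_not, realize_on_not, not_not]
  exact h1 M v hT hW

/-- A Henkin axiom on the left side whose witness `c` is fresh for itself and for the remaining
axioms is not needed for separation: quantify `c` existentially in the separator. -/
theorem Sep.of_insert_inl [DecidableEq V] {f : L →ᴸ P} {g : L →ᴸ Q} {TP : P.Theory} {TQ : Q.Theory}
    {wt : P.Formula (V ⊕ Unit) ⊕ Q.Formula (V ⊕ Unit) → V}
    {F : Set (P.Formula (V ⊕ Unit) ⊕ Q.Formula (V ⊕ Unit))} {φ : P.Formula (V ⊕ Unit)}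
    (hφ : Sum.inl (wt (.inl φ)) ∉ BoundedFormula.freeVarFinset φ)
    (hP : ∀ ψ, .inl ψ ∈ F → Sum.inl (wt (.inl φ)) ∉ BoundedFormula.freeVarFinset ψ ∧
      wt (.inl ψ) ≠ wt (.inl φ))
    (hQ : ∀ ψ, .inr ψ ∈ F → Sum.inl (wt (.inl φ)) ∉ BoundedFormula.freeVarFinset ψ ∧
      wt (.inr ψ) ≠ wt (.inl φ))
    (h : Sep f g TP TQ wt (insert (.inl φ) F)) : Sep f g TP TQ wt F := by
  obtain ⟨θ, h1, h2⟩ := h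
  refine ⟨exVar (wt (.inl φ)) θ, ?_, ?_⟩
  · intro M _ _ v hT hW
    rw [realize_exVar]
    obtain ⟨m, hm⟩ := exists_wit φ v hφ
    refine ⟨m, h1 M _ hT ?_⟩
    intro ψ hψ
    rcases hψ with hψ | hψ
    · cases hψ
      exact hm
    · exact (hW ψ hψ).update m (hP ψ hψ).1 (hP ψ hψ).2
  · intro M _ _ v hT hW
    rw [realize_on_not, realize_exVar]
    rintro ⟨m, hm⟩
    refine (realize_on_not g θ _).1 (h2 M _ hT ?_) hm
    intro ψ hψ
    have hψ : Sum.inr ψ ∈ F := by simpa using hψ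
    exact (hW ψ hψ).update m (hQ ψ hψ).1 (hQ ψ hψ).2

/-- Finitely many Henkin axioms are removed one at a time, in order of decreasing level of the
witness; the levels guarantee that the witness being removed is fresh. -/
theorem Sep.to_empty [DecidableEq V] {f : L →ᴸ P} {g : L →ᴸ Q} {TP : P.Theory} {TQ : Q.Theory}
    {wt : P.Formula (V ⊕ Unit) ⊕ Q.Formula (V ⊕ Unit) → V} (hinj : Function.Injective wt)
    (lvl : V → ℕ)
    (hlP : ∀ φ c, Sum.inl c ∈ BoundedFormula.freeVarFinset φ → lvl c < lvl (wt (.inl φ)))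
    (hlQ : ∀ φ c, Sum.inl c ∈ BoundedFormula.freeVarFinset φ → lvl c < lvl (wt (.inr φ)))
    (F : Finset (P.Formula (V ⊕ Unit) ⊕ Q.Formula (V ⊕ Unit))) (h : Sep f g TP TQ wt F) :
    Sep f g TP TQ wt ∅ := by
  classical
  induction F using Finset.induction_on_max_value (fun i => lvl (wt i)) with
  | empty => simpa using h
  | insert a s ha hmax ih =>
    refine ih ?_
    have hP : ∀ ψ, Sum.inl ψ ∈ s → Sum.inl (wt a) ∉ BoundedFormula.freeVarFinset ψ ∧
        wt (.inl ψ) ≠ wt a := fun ψ hψ =>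
      ⟨fun hm => absurd (hlP _ _ hm) (not_lt.2 (hmax _ hψ)),
        fun he => ha (hinj he ▸ hψ)⟩
    have hQ : ∀ ψ, Sum.inr ψ ∈ s → Sum.inl (wt a) ∉ BoundedFormula.freeVarFinset ψ ∧
        wt (.inr ψ) ≠ wt a := fun ψ hψ =>
      ⟨fun hm => absurd (hlQ _ _ hm) (not_lt.2 (hmax _ hψ)),
        fun he => ha (hinj he ▸ hψ)⟩
    rw [Finset.coe_insert] at h
    rcases a with φ | φ
    · exact h.of_insert_inl (fun hm => lt_irrefl _ (hlP _ _ hm)) hP hQ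
    · have h' := h.symm
      have e : Sum.swap ⁻¹' (insert (Sum.inr φ) (s : Set (P.Formula (V ⊕ Unit) ⊕ Q.Formula (V ⊕ Unit))))
          = insert (Sum.inl φ) (Sum.swap ⁻¹' (s : Set _)) := by
        ext (x | x) <;> simp
      rw [e] at h'
      have h2 := (h'.of_insert_inl (fun hm => lt_irrefl _ (hlQ _ _ hm)) hQ hP).symm
      have e1 : (wt ∘ Sum.swap) ∘ Sum.swap = wt := by ext x; simp
      have e2 : Sum.swap ⁻¹' (Sum.swap ⁻¹' (s : Set (P.Formula (V ⊕ Unit) ⊕ Q.Formula (V ⊕ Unit)))) = s := by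
        ext x; simp
      rwa [e1, e2] at h2

/-- If no finite set of Henkin axioms leads to a separator, there are models of the two theories
whose named elements satisfy the Henkin axioms and the same `L`-formulas. -/
theorem exists_models {f : L →ᴸ P} {g : L →ᴸ Q} {TP : P.Theory} {TQ : Q.Theory}
    {wt : P.Formula (V ⊕ Unit) ⊕ Q.Formula (V ⊕ Unit) → V}
    (h : ∀ F : Finset (P.Formula (V ⊕ Unit) ⊕ Q.Formula (V ⊕ Unit)), ¬ Sep f g TP TQ wt F) :
    ∃ (M : Type (max p pr w)) (_ : Nonempty M) (_ : P.Structure M) (v : V → M)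
      (N : Type (max q qr w)) (_ : Nonempty N) (_ : Q.Structure N) (v' : V → N),
      M ⊨ TP ∧ N ⊨ TQ ∧ (∀ φ : P.Formula (V ⊕ Unit), ∃ c, Wit v φ c) ∧
      (∀ φ : Q.Formula (V ⊕ Unit), ∃ c, Wit v' φ c) ∧
      ∀ θ : L.Formula V, (f.onFormula θ).Realize v ↔ (g.onFormula θ).Realize v' := by
  classical
  -- `N` satisfies the `L`-consequences of the `P`-side; then `M` satisfies the `L`-type of `v'`.
  obtain ⟨N, hN, hNs, v', hTQ, hWQ, hΘ⟩ := exists_model g TQ (wt ∘ Sum.inr)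
    {θ | ∃ F : Finset (P.Formula (V ⊕ Unit)), Entails TP (wt ∘ Sum.inl) F (f.onFormula θ)} (by
      intro F S hS hE
      have hS' : ∀ θ, ∃ G : Finset (P.Formula (V ⊕ Unit)), θ ∈ S →
          Entails TP (wt ∘ Sum.inl) G (f.onFormula θ) := fun θ => by
        by_cases hθ : θ ∈ S
        · obtain ⟨G, hG⟩ := hS hθ
          exact ⟨G, fun _ => hG⟩
        · exact ⟨∅, fun h => absurd h hθ⟩
      choose G hG using hS'
      refine h ((S.biUnion G).disjSum F) ⟨Formula.iInf fun θ : S => θ.1, ?_, ?_⟩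
      · intro M _ _ v hT hW
        rw [realize_on_iInf]
        intro θ hθ
        refine hG θ hθ M v hT fun φ hφ => hW φ ?_
        simp only [Set.mem_preimage, Finset.mem_coe, Finset.inl_mem_disjSum, Finset.mem_biUnion]
        exact ⟨θ, hθ, hφ⟩
      · intro M _ _ v hT hW
        refine hE M v hT fun φ hφ => hW φ ?_
        simpa using hφ)
  obtain ⟨M, hM, hMs, v, hTP, hWP, hΘ'⟩ := exists_model f TP (wt ∘ Sum.inl)
    {θ | (g.onFormula θ).Realize v'} (by
      intro F S hS hE
      have := hΘ _ ⟨F, hE⟩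
      rw [realize_on_not, realize_on_iInf] at this
      exact this hS)
  refine ⟨M, hM, hMs, v, N, hN, hNs, v', hTP, hTQ, fun φ => ⟨_, hWP φ⟩, fun φ => ⟨_, hWQ φ⟩,
    fun θ => ⟨fun hθ => ?_, fun hθ => hΘ' θ hθ⟩⟩
  by_contra hn
  exact (realize_on_not f θ v).1 (hΘ' θ.not ((realize_on_not g θ v').2 hn)) hθ

end Sep

/-! ### The structure of named elements -/

/-- If every satisfiable `φ(x)` has a named witness, the named elements form an elementary
substructure, by the Tarski–Vaught test. -/
theorem exists_elementary {P : FirstOrder.Language.{p, pr}} {V : Type w} {M : Type z} [P.Structure M]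
    (v : V → M) (h : ∀ φ : P.Formula (V ⊕ Unit), ∃ c, Wit v φ c) :
    ∃ S : P.ElementarySubstructure M, ∀ x, x ∈ S ↔ x ∈ Set.range v := by
  let S : P.Substructure M :=
    { carrier := Set.range v
      fun_mem := by
        intro n F x hx
        choose c hc using hx
        obtain ⟨d, hd⟩ := h (Term.equal (Term.func F fun i => Term.var (Sum.inl (c i)))
          (Term.var (Sum.inr ())))
        have := hd (Structure.funMap F x)
        simp only [Formula.realize_equal, Term.realize_func, Term.realize_var, Sum.elim_inl, hc,
          Sum.elim_inr, forall_const] at this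
        exact ⟨d, this.symm⟩ }
  refine ⟨S.toElementarySubstructure ?_, fun x => Iff.rfl⟩
  intro n φ x a hφ
  have hx : ∀ i, ∃ c, v c = x i := fun i => (x i).2
  choose c hc using hx
  let r : Empty ⊕ Fin (n + 1) → V ⊕ Unit :=
    Sum.elim Empty.elim (Fin.snoc (α := fun _ => V ⊕ Unit) (fun i => Sum.inl (c i)) (Sum.inr ()))
  have hr : ∀ m : M, (φ.toFormula.relabel r).Realize (Sum.elim v fun _ => m) ↔
      φ.Realize default (Fin.snoc ((↑) ∘ x) m : _ → M) := by
    intro m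
    rw [Formula.realize_relabel, BoundedFormula.realize_toFormula]
    have e1 : (Sum.elim v fun _ => m) ∘ r ∘ Sum.inl = (default : Empty → M) :=
      Subsingleton.elim _ _
    have e2 : (Sum.elim v fun _ => m) ∘ r ∘ Sum.inr = (Fin.snoc ((↑) ∘ x) m : _ → M) := by
      ext i
      refine Fin.lastCases ?_ (fun i => ?_) i <;> simp [r, hc]
    rw [← e1, ← e2]
    rfl
  obtain ⟨d, hd⟩ := h (φ.toFormula.relabel r)
  exact ⟨⟨v d, d, rfl⟩, (hr _).1 (hd a ((hr a).2 hφ))⟩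


/-- If all elements of the `P`-structure `X` and of the `L ⊕ L₂`-structure `Y` are named by `V`
and the names satisfy the same `L`-formulas, then `L₂` can be interpreted on `X` so that `X` is
isomorphic to `Y` in the language `L ⊕ L₂`. -/
theorem exists_glue {L : FirstOrder.Language.{u, ur}} {P : FirstOrder.Language.{p, pr}}
    {L₂ : FirstOrder.Language.{q, qr}} (f : L →ᴸ P) {V : Type w} {X : Type*} {Y : Type*}
    [P.Structure X] [(L.sum L₂).Structure Y] (v : V → X) (v' : V → Y)
    (hv : Function.Surjective v) (hv' : Function.Surjective v')
    (h : ∀ θ : L.Formula V, (f.onFormula θ).Realize v ↔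
      ((LHom.sumInl : L →ᴸ L.sum L₂).onFormula θ).Realize v') :
    ∃ _ : L₂.Structure X, ∀ τ : (L.sum L₂).Sentence,
      X ⊨ (LHom.sumMap f (LHom.id L₂)).onSentence τ ↔ Y ⊨ τ := by
  let iX : L.Structure X := f.reduct X
  let iY : L.Structure Y := (LHom.sumInl : L →ᴸ L.sum L₂).reduct Y
  simp only [LHom.realize_onFormula] at h
  have heq : ∀ c d, v c = v d ↔ v' c = v' d := fun c d => by
    simpa using h (Term.equal (Term.var c) (Term.var d))
  choose s hs using hv
  have he : ∀ c, v' (s (v c)) = v' c := fun c => (heq _ _).1 (hs (v c))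
  let e : X ≃ Y := Equiv.ofBijective (fun x => v' (s x)) ⟨fun x y hxy => by
      rw [← hs x, ← hs y]; exact (heq _ _).2 hxy, fun y => by
      obtain ⟨c, rfl⟩ := hv' y; exact ⟨v c, he c⟩⟩
  let iY₂ : L₂.Structure Y := (LHom.sumInr : L₂ →ᴸ L.sum L₂).reduct Y
  let iX₂ : L₂.Structure X :=
    { funMap := fun F x => e.symm (Structure.funMap F (e ∘ x))
      RelMap := fun R x => Structure.RelMap R (e ∘ x) }
  refine ⟨iX₂, fun τ => ?_⟩
  let iQ : (L.sum L₂).Structure X := (LHom.sumMap f (LHom.id L₂)).reduct X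
  rw [LHom.realize_onSentence]
  have hx : ∀ {n} (x : Fin n → X), e ∘ x = fun i => v' (s (x i)) := fun x => rfl
  let E : X ≃[L.sum L₂] Y :=
    { e with
      map_fun' := by
        rintro n (F | F) x
        · change e (Structure.funMap F x) = Structure.funMap F (e ∘ x)
          have := h (Term.equal (Term.func F fun i => Term.var (s (x i)))
            (Term.var (s (Structure.funMap F x))))
          simp only [Formula.realize_equal, Term.realize_func, Term.realize_var, hs, true_iff]
            at this
          exact this.symm
        · exact e.apply_symm_apply _
      map_rel' := by
        rintro n (R | R) x
        · change Structure.RelMap R (e ∘ x) ↔ Structure.RelMap R x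
          have := h (Relations.formula R fun i => Term.var (s (x i)))
          simp only [Formula.realize_rel, Term.realize_var, hs] at this
          exact this.symm
        · exact Iff.rfl }
  exact StrongHomClass.realize_sentence E τ

/-! ### Existence of fresh witnesses -/

open Cardinal in
theorem mk_formula_le (P : FirstOrder.Language.{p, pr}) (K : Type (max p pr z)) [Infinite K]
    (hP : Cardinal.lift.{max p pr z} P.card ≤ Cardinal.lift.{max p pr} #K) :
    #(P.Formula ((ℕ × K) ⊕ Unit)) ≤ #K := by
  have hK : ℵ₀ ≤ #K := Cardinal.aleph0_le_mk K
  have h1 : #(P.Formula ((ℕ × K) ⊕ Unit)) ≤ #(Σ n, P.BoundedFormula ((ℕ × K) ⊕ Unit) n) :=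
    Cardinal.mk_le_of_injective (f := fun φ => ⟨0, φ⟩) fun a b hab => by simpa using hab
  refine h1.trans (BoundedFormula.card_le.trans (max_le hK ?_))
  have hV : #((ℕ × K) ⊕ Unit) ≤ #K := by
    simp [Cardinal.aleph0_mul_eq hK, Cardinal.add_one_eq hK]
  refine Cardinal.add_le_of_le hK ?_ ?_
  · rw [Cardinal.lift_id'.{max p pr, max p pr z}]
    exact hV
  · rw [Cardinal.lift_id'.{max p pr, max p pr z}] at hP
    exact hP

/-- There is a supply `V` of variables with an injective choice of witnesses `wt`, such that the
witness of a formula has a higher level than each of its variables. Here `V = ℕ × K` for `K` at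
least as large as the set of formulas over `V`, the level being the first coordinate. -/
theorem exists_witnesses (P : FirstOrder.Language.{p, pr}) (Q : FirstOrder.Language.{q, qr}) :
    ∃ (V : Type (max p pr q qr)) (_ : DecidableEq V)
      (wt : P.Formula (V ⊕ Unit) ⊕ Q.Formula (V ⊕ Unit) → V) (lvl : V → ℕ),
      Function.Injective wt ∧
      (∀ φ c, Sum.inl c ∈ BoundedFormula.freeVarFinset φ → lvl c < lvl (wt (.inl φ))) ∧
      (∀ φ c, Sum.inl c ∈ BoundedFormula.freeVarFinset φ → lvl c < lvl (wt (.inr φ))) := by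
  classical
  let K : Type (max p pr q qr) := ℕ ⊕ (P.Symbols ⊕ Q.Symbols)
  have hK : Cardinal.aleph0 ≤ Cardinal.mk K := Cardinal.aleph0_le_mk K
  have hP : Cardinal.mk (P.Formula ((ℕ × K) ⊕ Unit)) ≤ Cardinal.mk K :=
    mk_formula_le.{p, pr, max q qr} P K (Cardinal.lift_mk_le'.2
      ⟨⟨fun s => Sum.inr (Sum.inl s), fun a b h => Sum.inl_injective (Sum.inr_injective h)⟩⟩)
  have hQ : Cardinal.mk (Q.Formula ((ℕ × K) ⊕ Unit)) ≤ Cardinal.mk K :=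
    mk_formula_le.{q, qr, max p pr} Q K (Cardinal.lift_mk_le'.2
      ⟨⟨fun s => Sum.inr (Sum.inr s), fun a b h => Sum.inr_injective (Sum.inr_injective h)⟩⟩)
  obtain ⟨e⟩ : Nonempty ((P.Formula ((ℕ × K) ⊕ Unit) ⊕ Q.Formula ((ℕ × K) ⊕ Unit)) ↪ K) := by
    rw [← Cardinal.le_def, Cardinal.mk_sum, Cardinal.lift_id, Cardinal.lift_id]
    exact Cardinal.add_le_of_le hK hP hQ
  let r : Finset ((ℕ × K) ⊕ Unit) → ℕ := fun s => s.sup (Sum.elim Prod.fst fun _ => 0)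
  have hr : ∀ (s : Finset ((ℕ × K) ⊕ Unit)) (c : ℕ × K), Sum.inl c ∈ s → c.1 < r s + 1 :=
    fun s c hc => Nat.lt_succ_of_le (Finset.le_sup (f := Sum.elim Prod.fst fun _ => 0) hc)
  refine ⟨ℕ × K, inferInstance, fun i => (Sum.elim
    (fun φ => r (BoundedFormula.freeVarFinset φ)) (fun φ => r (BoundedFormula.freeVarFinset φ)) i
      + 1, e i), Prod.fst, fun i j hij => e.injective (Prod.ext_iff.1 hij).2,
    fun φ c hc => hr _ _ hc, fun φ c hc => hr _ _ hc⟩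

/-! ### Joint consistency -/

/-- A form of Robinson's joint consistency theorem: either some `L`-sentence separates `TP` from
`TQ`, or they have a common model. -/
theorem exists_separator_or_model {L : FirstOrder.Language.{u, ur}}
    {P : FirstOrder.Language.{p, pr}} {L₂ : FirstOrder.Language.{q, qr}} (f : L →ᴸ P)
    (TP : P.Theory) (TQ : (L.sum L₂).Theory) :
    (∃ I : L.Sentence,
      (∀ (M : Type (max p pr u ur q qr)) [Nonempty M] [P.Structure M], M ⊨ TP →
        M ⊨ f.onSentence I) ∧
      (∀ (N : Type (max p pr u ur q qr)) [Nonempty N] [(L.sum L₂).Structure N], N ⊨ TQ →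
        ¬ N ⊨ (LHom.sumInl : L →ᴸ L.sum L₂).onSentence I)) ∨
    ∃ (X : Type (max p pr u ur q qr)) (_ : Nonempty X) (_ : P.Structure X) (_ : L₂.Structure X),
      X ⊨ TP ∧ ∀ τ ∈ TQ, X ⊨ (LHom.sumMap f (LHom.id L₂)).onSentence τ := by
  obtain ⟨V, _, wt, lvl, hinj, hlP, hlQ⟩ := exists_witnesses P (L.sum L₂)
  by_cases hsep : ∃ F : Finset (P.Formula (V ⊕ Unit) ⊕ (L.sum L₂).Formula (V ⊕ Unit)),
      Sep f (LHom.sumInl : L →ᴸ L.sum L₂) TP TQ wt F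
  · left
    obtain ⟨F, hF⟩ := hsep
    obtain ⟨θ, h1, h2⟩ := hF.to_empty hinj lvl hlP hlQ
    -- `θ` holds for all values of its variables on one side and for none on the other, so the
    -- variables may be identified before taking the universal closure.
    refine ⟨Formula.iAlls Unit (θ.relabel fun _ => Sum.inr () : L.Formula (Empty ⊕ Unit)), ?_, ?_⟩
    · intro M _ _ hM
      let _ : L.Structure M := f.reduct M
      rw [LHom.realize_onSentence, Sentence.Realize, Formula.realize_iAlls]
      intro i
      rw [Formula.realize_relabel, ← LHom.realize_onFormula f]
      exact h1 M _ hM (fun _ h => h.elim)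
    · intro N _ _ hN
      let _ : L.Structure N := (LHom.sumInl : L →ᴸ L.sum L₂).reduct N
      rw [LHom.realize_onSentence, Sentence.Realize, Formula.realize_iAlls]
      intro h
      have := h fun _ => Classical.arbitrary N
      rw [Formula.realize_relabel, ← LHom.realize_onFormula (LHom.sumInl : L →ᴸ L.sum L₂)] at this
      exact (realize_on_not _ _ _).1 (h2 N _ hN (fun _ h => h.elim)) this
  · right
    push Not at hsep
    obtain ⟨M, _, _, v, N, _, _, v', hTP, hTQ, hWP, hWQ, hθ⟩ := exists_models hsep
    obtain ⟨S, hS⟩ := exists_elementary v hWP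
    obtain ⟨R, hR⟩ := exists_elementary v' hWQ
    let vS : V → S := fun c => ⟨v c, (hS _).2 ⟨c, rfl⟩⟩
    let vR : V → R := fun c => ⟨v' c, (hR _).2 ⟨c, rfl⟩⟩
    have hvS : Function.Surjective vS := fun x => by
      obtain ⟨c, hc⟩ := (hS _).1 x.2
      exact ⟨c, Subtype.ext hc⟩
    have hvR : Function.Surjective vR := fun x => by
      obtain ⟨c, hc⟩ := (hR _).1 x.2
      exact ⟨c, Subtype.ext hc⟩
    obtain ⟨s, hs⟩ := exists_glue f vS vR hvS hvR fun θ => by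
      rw [← S.subtype.map_formula, ← R.subtype.map_formula]
      exact hθ θ
    refine ⟨S, inferInstance, inferInstance, s, inferInstance, fun τ hτ => ?_⟩
    rw [hs]
    exact Theory.realize_sentence_of_mem TQ hτ

end TSeparator

/-- Existence of T-separators (reverse Craig interpolants modulo a theory T):
if the lifted theory `T` together with `A` (over `L ⊕ L₁`) and `B` (over `L ⊕ L₂`)
has no model over the combined language `(L ⊕ L₁) ⊕ L₂`, then there is an
`L`-sentence `I` entailed by `T ∪ {A}` and inconsistent with `T ∪ {B}`. -/
theorem exists_T_separator (L L₁ L₂ : Language) (T : L.Theory)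
    (A : (L.sum L₁).Sentence) (B : (L.sum L₂).Sentence)
    (liftA : (L.sum L₁) →ᴸ ((L.sum L₁).sum L₂))
    (liftB : (L.sum L₂) →ᴸ ((L.sum L₁).sum L₂))
    (liftL : L →ᴸ ((L.sum L₁).sum L₂))
    (hA : liftA = LHom.sumInl)
    (hB : liftB = LHom.sumMap LHom.sumInl (LHom.id L₂))
    (hL : liftL = LHom.comp LHom.sumInl LHom.sumInl)
    (hunsat : ¬ (liftL.onTheory T ∪ {liftA.onSentence A, liftB.onSentence B}).IsSatisfiable) :
    ∃ I : L.Sentence,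
      ((liftL.onTheory T ∪ {liftA.onSentence A}) ⊨ᵇ liftL.onSentence I) ∧
      ¬ (liftL.onTheory T ∪ {liftL.onSentence I, liftB.onSentence B}).IsSatisfiable := by
  subst hA hB
  -- The `L`-reduct of a structure for the combined language is the same through `L ⊕ L₁` and
  -- through `L ⊕ L₂`.
  have hP : ∀ (M : Type _) [((L.sum L₁).sum L₂).Structure M] (τ : L.Sentence),
      M ⊨ liftL.onSentence τ ↔ @Sentence.Realize (L.sum L₁) M
        ((LHom.sumInl : L.sum L₁ →ᴸ (L.sum L₁).sum L₂).reduct M)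
        ((LHom.sumInl : L →ᴸ L.sum L₁).onSentence τ) := by
    intro M _ τ
    subst hL
    let _ : (L.sum L₁).Structure M :=
      (LHom.sumInl : L.sum L₁ →ᴸ (L.sum L₁).sum L₂).reduct M
    let _ : L.Structure M := (LHom.sumInl : L →ᴸ L.sum L₁).reduct M
    have : (LHom.comp (LHom.sumInl : L.sum L₁ →ᴸ (L.sum L₁).sum L₂)
      (LHom.sumInl : L →ᴸ L.sum L₁)).IsExpansionOn M := ⟨fun _ _ => rfl, fun _ _ => rfl⟩
    rw [LHom.realize_onSentence, LHom.realize_onSentence]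
  have hQ : ∀ (M : Type _) [((L.sum L₁).sum L₂).Structure M] (τ : L.Sentence),
      M ⊨ liftL.onSentence τ ↔ @Sentence.Realize (L.sum L₂) M
        ((LHom.sumMap LHom.sumInl (LHom.id L₂) : L.sum L₂ →ᴸ (L.sum L₁).sum L₂).reduct M)
        ((LHom.sumInl : L →ᴸ L.sum L₂).onSentence τ) := by
    intro M _ τ
    subst hL
    let _ : (L.sum L₂).Structure M :=
      (LHom.sumMap LHom.sumInl (LHom.id L₂) : L.sum L₂ →ᴸ (L.sum L₁).sum L₂).reduct M
    let _ : L.Structure M := (LHom.sumInl : L →ᴸ L.sum L₂).reduct M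
    have : (LHom.comp (LHom.sumInl : L.sum L₁ →ᴸ (L.sum L₁).sum L₂)
      (LHom.sumInl : L →ᴸ L.sum L₁)).IsExpansionOn M := ⟨fun _ _ => rfl, fun _ _ => rfl⟩
    rw [LHom.realize_onSentence, LHom.realize_onSentence]
  rcases TSeparator.exists_separator_or_model (LHom.sumInl : L →ᴸ L.sum L₁)
    ((LHom.sumInl : L →ᴸ L.sum L₁).onTheory T ∪ {A})
    ((LHom.sumInl : L →ᴸ L.sum L₂).onTheory T ∪ {B}) with ⟨I, hI1, hI2⟩ | ⟨X, _, _, _, hXP, hXQ⟩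
  · refine ⟨I, ?_, ?_⟩
    · rw [Theory.models_sentence_iff]
      intro M
      rw [hP]
      let _ : (L.sum L₁).Structure M :=
        (LHom.sumInl : L.sum L₁ →ᴸ (L.sum L₁).sum L₂).reduct M
      refine hI1 M ⟨?_⟩
      rintro _ (⟨τ, hτ, rfl⟩ | rfl)
      · exact (hP M τ).1 (M.is_model.realize_of_mem _ (Or.inl ⟨τ, hτ, rfl⟩))
      · exact (LHom.realize_onSentence M _ _).1 (M.is_model.realize_of_mem _ (Or.inr rfl))
    · rintro ⟨M⟩
      let _ : (L.sum L₂).Structure M :=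
        (LHom.sumMap LHom.sumInl (LHom.id L₂) : L.sum L₂ →ᴸ (L.sum L₁).sum L₂).reduct M
      refine hI2 M ⟨?_⟩ ((hQ M I).1 (M.is_model.realize_of_mem _ (Or.inr (Or.inl rfl))))
      rintro _ (⟨τ, hτ, rfl⟩ | rfl)
      · exact (hQ M τ).1 (M.is_model.realize_of_mem _ (Or.inl ⟨τ, hτ, rfl⟩))
      · exact (LHom.realize_onSentence M _ _).1
          (M.is_model.realize_of_mem _ (Or.inr (Or.inr rfl)))
  · refine (hunsat ?_).elim
    have : X ⊨ (liftL.onTheory T ∪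
        {(LHom.sumInl : L.sum L₁ →ᴸ (L.sum L₁).sum L₂).onSentence A,
          (LHom.sumMap LHom.sumInl (LHom.id L₂)).onSentence B}) := by
      refine ⟨?_⟩
      rintro _ (⟨τ, hτ, rfl⟩ | rfl | rfl)
      · rw [hP]
        exact hXP.realize_of_mem _ (Or.inl ⟨τ, hτ, rfl⟩)
      · rw [LHom.realize_onSentence]
        exact hXP.realize_of_mem _ (Or.inr rfl)
      · exact hXQ _ (Or.inr rfl)
    exact Theory.Model.isSatisfiable X
end

section
/- (Farkas' lemma) Let A be a real m × n matrix and b ∈ ℝ^m a column vector. There exists a column vector x ∈ ℝ^n with A x ≤ b (componentwise) if and only if for every row vector y ∈ ℝ^m with y ≥ 0 (componentwise) and y A = 0 it is the case that y · b ≥ 0. -/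
open Matrix

/-!
Necessity is immediate: if `A x ≤ b`, `y ≥ 0` and `y A = 0`, then `0 = (y A) x = y (A x) ≤ y b`.

Sufficiency is Fourier–Motzkin elimination, by induction on the number of unknowns. Let `a` be the
first column of `A`. Every row `p` with `a p = 0`, and every combination `(-a q) row p + (a p) row q`
with `a p > 0 > a q`, is a nonnegative combination of rows of the system in which the first unknown
does not occur. A certificate `y` for this eliminated system pulls back to a certificate for the
original one, so the eliminated system satisfies the hypothesis and is solvable by induction. The
eliminated inequalities say exactly that the lower bounds on the first unknown lie below the upper
bounds (`exists_scalar_le`), so the solution extends.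
-/

/-- The system `a i * t ≤ c i` in one unknown `t` is solvable as soon as it has no contradiction
visible in a single row with zero coefficient or in two rows with coefficients of opposite sign. -/
lemma exists_scalar_le {ι : Type*} [Fintype ι] (a c : ι → ℝ)
    (h0 : ∀ p, a p = 0 → 0 ≤ c p)
    (h1 : ∀ p q, 0 < a p → a q < 0 → 0 ≤ -a q * c p + a p * c q) :
    ∃ t : ℝ, ∀ i, a i * t ≤ c i := by
  classical
  -- A value between the lower bounds `c q / a q` and the upper bounds `c p / a p`.
  obtain ⟨t, hlow, hupp⟩ : ∃ t : ℝ, (∀ q, a q < 0 → c q / a q ≤ t) ∧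
      (∀ p, 0 < a p → t ≤ c p / a p) := by
    by_cases hN : (Finset.univ.filter fun q => a q < 0).Nonempty
    · refine ⟨Finset.sup' _ hN fun q => c q / a q, fun q hq => ?_, fun p hp => ?_⟩
      · exact Finset.le_sup' (fun q => c q / a q) (by simpa using hq)
      · refine Finset.sup'_le _ _ fun q hq => ?_
        have hq' : a q < 0 := by simpa using hq
        rw [div_le_iff_of_neg hq', div_mul_eq_mul_div, div_le_iff₀ hp]
        linarith [h1 p q hp hq']
    · obtain ⟨t, ht⟩ := (Set.finite_range fun p => c p / a p).bddBelow
      refine ⟨t, fun q hq => (hN ⟨q, by simpa using hq⟩).elim, fun p _ => ht ⟨p, rfl⟩⟩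
  refine ⟨t, fun i => ?_⟩
  rcases lt_trichotomy (a i) 0 with hi | hi | hi
  · have := (div_le_iff_of_neg hi).1 (hlow i hi)
    linarith
  · simpa [hi] using h0 i hi
  · have := (le_div_iff₀ hi).1 (hupp i hi)
    linarith

/-- Sufficiency in Farkas' lemma. The rows are indexed by an arbitrary finite type because the
elimination step replaces the index type `ι` by `ι × ι`. -/
lemma exists_solution_of_certificates (n : ℕ) : ∀ {ι : Type} [Fintype ι]
    (A : ι → Fin n → ℝ) (b : ι → ℝ),
    (∀ y : ι → ℝ, (∀ i, 0 ≤ y i) → (∀ j, ∑ i, y i * A i j = 0) → 0 ≤ ∑ i, y i * b i) →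
    ∃ x : Fin n → ℝ, ∀ i, ∑ j, A i j * x j ≤ b i := by
  classical
  induction n with
  | zero =>
    intro ι _ A b h
    refine ⟨0, fun i => ?_⟩
    have := h (Pi.single i 1) (fun k => by by_cases hk : k = i <;> simp [Pi.single_apply, hk])
      (fun j => j.elim0)
    simpa [Pi.single_apply] using this
  | succ n ih =>
    intro ι _ A b h
    -- Row `(p, q)` of the eliminated system is `u p q • row p + v p q • row q`; it is the row `p`
    -- if `A p 0 = 0`, and zero for the pairs that play no role.
    let u : ι → ι → ℝ := fun p q =>
      if A p 0 = 0 then 1 else if 0 < A p 0 ∧ A q 0 < 0 then -A q 0 else 0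
    let v : ι → ι → ℝ := fun p q => if 0 < A p 0 ∧ A q 0 < 0 then A p 0 else 0
    have hu : ∀ p q, 0 ≤ u p q := by
      intro p q
      dsimp only [u]
      split_ifs with h1 h2 <;> linarith
    have hv : ∀ p q, 0 ≤ v p q := by
      intro p q
      dsimp only [v]
      split_ifs with h1 <;> linarith
    have huv : ∀ p q, u p q * A p 0 + v p q * A q 0 = 0 := by
      intro p q
      dsimp only [u, v]
      split_ifs with h1 h2 h2
      · linarith
      · simp [h1]
      · ring
      · ring
    obtain ⟨x, hx⟩ := ih (ι := ι × ι)
      (fun r j => u r.1 r.2 * A r.1 j.succ + v r.1 r.2 * A r.2 j.succ)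
      (fun r => u r.1 r.2 * b r.1 + v r.1 r.2 * b r.2) (by
        intro y hy hyA
        let z : ι → ℝ := fun i => ∑ r : ι × ι, y r *
          (u r.1 r.2 * (if r.1 = i then 1 else 0) + v r.1 r.2 * (if r.2 = i then 1 else 0))
        -- `z` is the pullback of `y` along the elimination.
        have hz : ∀ f : ι → ℝ, ∑ i, z i * f i =
            ∑ r : ι × ι, y r * (u r.1 r.2 * f r.1 + v r.1 r.2 * f r.2) := by
          intro f
          simp only [z, Finset.sum_mul]
          rw [Finset.sum_comm]
          refine Finset.sum_congr rfl fun r _ => ?_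
          simp only [mul_add, add_mul, Finset.sum_add_distrib]
          simp [mul_assoc]
        rw [← hz]
        refine h z (fun i => Finset.sum_nonneg fun r _ => ?_) (fun j => ?_)
        · refine mul_nonneg (hy r) (add_nonneg (mul_nonneg (hu _ _) ?_) (mul_nonneg (hv _ _) ?_)) <;>
            split_ifs <;> norm_num
        · rw [hz fun i => A i j]
          refine Fin.cases ?_ (fun j => ?_) j
          · simp [huv]
          · exact hyA j)
    -- Slack left for the first unknown.
    let c : ι → ℝ := fun i => b i - ∑ j : Fin n, A i j.succ * x j
    have hc : ∀ p q, 0 ≤ u p q * c p + v p q * c q := by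
      intro p q
      have := hx (p, q)
      simp only [add_mul, Finset.sum_add_distrib, mul_assoc, ← Finset.mul_sum] at this
      simp only [c]
      linarith
    obtain ⟨t, ht⟩ := exists_scalar_le (fun i => A i 0) c
      (fun p hp => by simpa [u, v, hp] using hc p p)
      (fun p q hp hq => by simpa [u, v, hp, hq, hp.ne'] using hc p q)
    refine ⟨Fin.cons t x, fun i => ?_⟩
    have := ht i
    simp only [c] at this
    simp only [Fin.sum_univ_succ, Fin.cons_zero, Fin.cons_succ]
    linarith

/-- Farkas' lemma: `A x ≤ b` is solvable iff every nonnegative `y` with `y A = 0`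
satisfies `y ⬝ᵥ b ≥ 0`. -/
theorem farkas_lemma (m n : ℕ) (A : Matrix (Fin m) (Fin n) ℝ) (b : Fin m → ℝ) :
    (∃ x : Fin n → ℝ, A.mulVec x ≤ b) ↔
      ∀ y : Fin m → ℝ, 0 ≤ y → Matrix.vecMul y A = 0 → 0 ≤ y ⬝ᵥ b := by
  constructor
  · rintro ⟨x, hx⟩ y hy hyA
    calc (0 : ℝ) = y ⬝ᵥ (A *ᵥ x) := by rw [Matrix.dotProduct_mulVec, hyA, zero_dotProduct]
      _ ≤ y ⬝ᵥ b := Finset.sum_le_sum fun i _ => mul_le_mul_of_nonneg_left (hx i) (hy i)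
  · intro h
    exact exists_solution_of_certificates n A b fun y hy hyA => h y hy (funext hyA)
end

section
/- Let A be a rational m × n matrix and b ∈ ℚ^m. If there is no vector x ∈ ℚ^n with A x ≤ b (componentwise), then there exists a rational row vector y ∈ ℚ^m with y ≥ 0 (componentwise), y A = 0, and y · b < 0. Equivalently: whenever a finite conjunction of linear inequalities 0 ≤ t_i with rational coefficients is unsatisfiable over the rationals, some non-negative rational linear combination of the inequalities simplifies to 0 ≤ β for a constant β < 0. -/
open Matrix

/-!
The proof is Fourier–Motzkin elimination, by induction on the number of variables, for systems
indexed by an arbitrary finite type. Let `a` be the column of the variable to be eliminated. The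
matrix `elimWeights a` has nonnegative entries and annihilates `a`; multiplying the system by it
gives a system in the remaining variables. A solution of the new system extends to a solution of
the old one (`exists_elim_solution`: every lower bound on the eliminated variable lies below every
upper bound), so if the old system is infeasible, so is the new one. A certificate `z` for the new
system then pulls back to the certificate `z ᵥ* elimWeights a` for the old one.
-/

/-- The Fourier–Motzkin multipliers for a variable with coefficient column `a`. The row `(i, j)`
with `a i > 0 > a j` combines the inequalities `i` and `j` so that the variable cancels; the rows
`(i, j)` with `a i = 0` keep the inequality `i`; all other rows are zero. -/
def elimWeights {ι : Type} [DecidableEq ι] (a : ι → ℚ) : Matrix (ι × ι) ι ℚ :=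
  Matrix.of fun p =>
    if a p.1 = 0 then Pi.single p.1 1
    else if 0 < a p.1 ∧ a p.2 < 0 then Pi.single p.1 (-a p.2) + Pi.single p.2 (a p.1)
    else 0

lemma elimWeights_nonneg {ι : Type} [DecidableEq ι] (a : ι → ℚ) (p : ι × ι) :
    0 ≤ elimWeights a p := by
  change 0 ≤ (if _ then _ else if _ then _ else _ : ι → ℚ)
  split_ifs with h1 h2
  · exact Pi.single_nonneg.2 zero_le_one
  · exact add_nonneg (Pi.single_nonneg.2 (by linarith)) (Pi.single_nonneg.2 h2.1.le)
  · exact le_rfl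

lemma elimWeights_mulVec {ι : Type} [Fintype ι] [DecidableEq ι] (a c : ι → ℚ) (p : ι × ι) :
    (elimWeights a *ᵥ c) p =
      if a p.1 = 0 then c p.1
      else if 0 < a p.1 ∧ a p.2 < 0 then -a p.2 * c p.1 + a p.1 * c p.2
      else 0 := by
  change (if _ then _ else if _ then _ else _ : ι → ℚ) ⬝ᵥ c = _
  split_ifs <;> simp [add_dotProduct]

lemma elimWeights_mulVec_self {ι : Type} [Fintype ι] [DecidableEq ι] (a : ι → ℚ) :
    elimWeights a *ᵥ a = 0 := by
  ext p
  rw [elimWeights_mulVec]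
  split_ifs with h1 h2
  · exact h1
  · simp only [Pi.zero_apply]; ring
  · rfl

/-- A one-variable system `a i * t ≤ c i` is solvable as soon as all the variable-free
inequalities produced by elimination hold. -/
lemma exists_elim_solution {ι : Type} [Fintype ι] [DecidableEq ι] (a c : ι → ℚ)
    (h : 0 ≤ elimWeights a *ᵥ c) : ∃ t : ℚ, ∀ i, a i * t ≤ c i := by
  have hzero : ∀ i, a i = 0 → 0 ≤ c i := fun i hi => by
    have := h (i, i)
    rw [elimWeights_mulVec] at this
    simpa [hi] using this
  have hpair : ∀ i j, 0 < a i → a j < 0 → c j / a j ≤ c i / a i := fun i j hi hj => by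
    have := h (i, j)
    rw [elimWeights_mulVec] at this
    simp only [hi.ne', hi, hj, if_false, and_self, if_true, Pi.zero_apply] at this
    rw [div_le_iff_of_neg hj, div_mul_eq_mul_div, div_le_iff₀ hi]
    linarith
  -- It suffices that `t` lies above all lower bounds and below all upper bounds.
  suffices ∃ t : ℚ, (∀ i, 0 < a i → t ≤ c i / a i) ∧ ∀ j, a j < 0 → c j / a j ≤ t by
    obtain ⟨t, hu, hl⟩ := this
    refine ⟨t, fun i => ?_⟩
    rcases lt_trichotomy (a i) 0 with hi | hi | hi
    · have := (div_le_iff_of_neg hi).1 (hl i hi)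
      linarith
    · simpa [hi] using hzero i hi
    · have := (le_div_iff₀ hi).1 (hu i hi)
      linarith
  by_cases hpos : ∃ i, 0 < a i
  · -- The least upper bound on the variable works.
    obtain ⟨i₀, hi₀⟩ := hpos
    obtain ⟨i, hi, hmin⟩ := Finset.exists_min_image (Finset.univ.filter fun i => 0 < a i)
      (fun i => c i / a i) ⟨i₀, by simpa using hi₀⟩
    simp only [Finset.mem_filter, Finset.mem_univ, true_and] at hi hmin
    exact ⟨c i / a i, hmin, fun j hj => hpair i j hi hj⟩
  · -- There are only lower bounds.
    obtain ⟨t, ht⟩ := (Set.finite_range fun j => c j / a j).bddAbove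
    exact ⟨t, fun i hi => (hpos ⟨i, hi⟩).elim, fun j _ => ht ⟨j, rfl⟩⟩

/-- Farkas' lemma for systems indexed by any finite type: elimination squares the number of
inequalities, so the induction has to vary the index type. -/
lemma farkas_fintype (n : ℕ) : ∀ (ι : Type) [Fintype ι] (A : Matrix ι (Fin n) ℚ) (b : ι → ℚ),
    (¬ ∃ x : Fin n → ℚ, A *ᵥ x ≤ b) → ∃ y : ι → ℚ, 0 ≤ y ∧ y ᵥ* A = 0 ∧ y ⬝ᵥ b < 0 := by
  classical
  induction n with
  | zero =>
    intro ι _ A b h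
    -- Without variables, infeasibility means that some `b i` is negative.
    have hb : ∃ i, b i < 0 := by
      by_contra! hb
      exact h ⟨0, by simpa using (show 0 ≤ b from hb)⟩
    obtain ⟨i, hi⟩ := hb
    exact ⟨Pi.single i 1, Pi.single_nonneg.2 zero_le_one, Subsingleton.elim _ _, by simpa using hi⟩
  | succ n ih =>
    intro ι _ A b h
    set a : ι → ℚ := fun i => A i 0 with ha
    set B : Matrix ι (Fin n) ℚ := Matrix.of fun i j => A i j.succ with hB
    set W := elimWeights a with hW
    obtain ⟨z, hz, hzA, hzb⟩ := ih (ι × ι) (W * B) (W *ᵥ b) (by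
      rintro ⟨x, hx⟩
      have hc : 0 ≤ W *ᵥ (b - B *ᵥ x) := by
        rw [Matrix.mulVec_sub, Matrix.mulVec_mulVec]
        exact sub_nonneg.2 hx
      obtain ⟨t, ht⟩ := exists_elim_solution a _ hc
      refine h ⟨Fin.cons t x, fun i => ?_⟩
      have := ht i
      simp only [Pi.sub_apply, Matrix.mulVec, dotProduct, hB, ha, Matrix.of_apply] at this
      simp only [Matrix.mulVec, dotProduct, Fin.sum_univ_succ, Fin.cons_zero, Fin.cons_succ]
      linarith)
    refine ⟨z ᵥ* W, fun i => ?_, ?_, ?_⟩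
    · exact Finset.sum_nonneg fun p _ => mul_nonneg (hz p) (elimWeights_nonneg a p i)
    · ext j
      refine Fin.cases ?_ (fun k => ?_) j
      · change (z ᵥ* W) ⬝ᵥ a = 0
        rw [← Matrix.dotProduct_mulVec, elimWeights_mulVec_self, dotProduct_zero]
      · rw [← Matrix.vecMul_vecMul] at hzA
        exact congrFun hzA k
    · rwa [← Matrix.dotProduct_mulVec]


/-- Rational Farkas certificates of unsatisfiability: if `A x ≤ b` has no rational
solution, then some nonnegative rational combination `y` with `y A = 0` has `y ⬝ᵥ b < 0`. -/
theorem farkas_certificate (m n : ℕ) (A : Matrix (Fin m) (Fin n) ℚ) (b : Fin m → ℚ)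
    (h : ¬ ∃ x : Fin n → ℚ, A.mulVec x ≤ b) :
    ∃ y : Fin m → ℚ, 0 ≤ y ∧ Matrix.vecMul y A = 0 ∧ y ⬝ᵥ b < 0 := by
  exact farkas_fintype n (Fin m) A b h
end

section
/- (Interpolants for linear inequalities) Let K be a finite set of variable indices, and consider finite families of affine functions t_i(x) = Σ_{k∈K} c_{i,k} x_k + d_i (for i in a finite index set I) and s_j(x) = Σ_{k∈K} b_{j,k} x_k + e_j (for j in a finite index set J) with real coefficients. Suppose α_i ≥ 0 (i ∈ I) and β_j ≥ 0 (j ∈ J) are real numbers such that the combination Σ_i α_i t_i + Σ_j β_j s_j is a constant negative function, i.e., for every k ∈ K, Σ_i α_i c_{i,k} + Σ_j β_j b_{j,k} = 0, and Σ_i α_i d_i + Σ_j β_j e_j < 0. Then the affine function u(x) = Σ_i α_i t_i(x) satisfies: (1) for every x ∈ ℝ^K, if 0 ≤ t_i(x) for all i ∈ I then 0 ≤ u(x); (2) for every x ∈ ℝ^K, if 0 ≤ u(x) and 0 ≤ s_j(x) for all j ∈ J, then a contradiction follows (no such x exists); and (3) for every k ∈ K, if the coefficient Σ_i α_i c_{i,k}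 of x_k in u is nonzero, then x_k occurs in some t_i (some c_{i,k} ≠ 0) and also in some s_j (some b_{j,k} ≠ 0). -/
/-!
A nonnegative combination of nonnegative affine functions is nonnegative
(`combination_nonneg`); applied to the `t i` this is entailment. Applied to the `s j`, it
contradicts `0 ≤ u(x)`, because `u` plus the `β`-combination of the `s j` is a negative constant.
The coefficients of `u` and of the `β`-combination are opposite, so a variable with nonzero
coefficient in `u` has nonzero coefficient in both combinations, hence occurs in both families.
-/

open Finset

theorem combination_nonneg {I K : Type} [Fintype I] [Fintype K]
    (c : I → K → ℝ) (d : I → ℝ) (α : I → ℝ) (hα : ∀ i, 0 ≤ α i) (x : K → ℝ)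
    (h : ∀ i, 0 ≤ (∑ k, c i k * x k) + d i) :
    0 ≤ (∑ k, (∑ i, α i * c i k) * x k) + (∑ i, α i * d i) := by
  have key : (∑ k, (∑ i, α i * c i k) * x k) + (∑ i, α i * d i)
      = ∑ i, α i * ((∑ k, c i k * x k) + d i) := by
    simp only [mul_add, Finset.sum_add_distrib, Finset.sum_mul, Finset.mul_sum, mul_assoc]
    rw [Finset.sum_comm]
  rw [key]
  exact Finset.sum_nonneg fun i _ => mul_nonneg (hα i) (h i)

theorem exists_ne_zero_of_combination {I : Type} [Fintype I] (α a : I → ℝ)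
    (h : ∑ i, α i * a i ≠ 0) : ∃ i, a i ≠ 0 := by
  obtain ⟨i, -, hi⟩ := Finset.exists_ne_zero_of_sum_ne_zero h
  exact ⟨i, right_ne_zero_of_mul hi⟩

/-- Interpolants for linear inequalities (LRA separators from Farkas coefficients):
if a nonnegative combination of the affine functions `t i` and `s j` is constant and
negative, then `u = Σ_i α i • t i` gives a separator `0 ≤ u(x)`:
(1) it is entailed by the `t`-inequalities, (2) it contradicts the `s`-inequalities,
and (3) it only mentions variables occurring in both parts. -/
theorem lra_interpolant (I J K : Type) [Fintype I] [Fintype J] [Fintype K]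
    (c : I → K → ℝ) (d : I → ℝ) (b : J → K → ℝ) (e : J → ℝ)
    (α : I → ℝ) (β : J → ℝ) (hα : ∀ i, 0 ≤ α i) (hβ : ∀ j, 0 ≤ β j)
    (hcoef : ∀ k, (∑ i, α i * c i k) + (∑ j, β j * b j k) = 0)
    (hconst : (∑ i, α i * d i) + (∑ j, β j * e j) < 0) :
    (∀ x : K → ℝ, (∀ i, 0 ≤ (∑ k, c i k * x k) + d i) →
        0 ≤ (∑ k, (∑ i, α i * c i k) * x k) + (∑ i, α i * d i)) ∧
    (∀ x : K → ℝ, 0 ≤ (∑ k, (∑ i, α i * c i k) * x k) + (∑ i, α i * d i) →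
        (∀ j, 0 ≤ (∑ k, b j k * x k) + e j) → False) ∧
    (∀ k, (∑ i, α i * c i k) ≠ 0 → (∃ i, c i k ≠ 0) ∧ (∃ j, b j k ≠ 0)) := by
  refine ⟨fun x h => combination_nonneg c d α hα x h, fun x hu hs => ?_, fun k hk => ?_⟩
  · have hv := combination_nonneg b e β hβ x hs
    have hcancel : (∑ k, (∑ i, α i * c i k) * x k) + (∑ k, (∑ j, β j * b j k) * x k) = 0 := by
      simp only [← Finset.sum_add_distrib, ← add_mul, hcoef, zero_mul, Finset.sum_const_zero]
    linarith
  · refine ⟨exists_ne_zero_of_combination α (c · k) hk,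
      exists_ne_zero_of_combination β (b · k) fun h => hk ?_⟩
    have := hcoef k
    linarith
end

section
/- For every natural number n ≥ 2: (1) there exist real numbers x, y, z with 0 ≤ y + 2nx + n − 1, 0 ≤ −y − 2nx, 0 ≤ y + 2nz − 1, and 0 ≤ −y − 2nz + n; but (2) there exist no integers x, y, z with 0 ≤ y + 2nx + n − 1, 0 ≤ −y − 2nx, 0 ≤ y + 2nz − 1, and 0 ≤ −y − 2nz + n. That is, the conjunction A_n ∧ B_n is satisfiable over the reals but unsatisfiable over the integers. -/
/-- For `n ≥ 2`, the conjunction `A_n ∧ B_n` is satisfiable over the reals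
but unsatisfiable over the integers. -/
theorem An_Bn_real_sat_int_unsat (n : ℕ) (hn : 2 ≤ n) :
    (∃ x y z : ℝ, 0 ≤ y + 2*n*x + n - 1 ∧ 0 ≤ -y - 2*n*x ∧
        0 ≤ y + 2*n*z - 1 ∧ 0 ≤ -y - 2*n*z + n) ∧
    ¬ (∃ x y z : ℤ, 0 ≤ y + 2*n*x + n - 1 ∧ 0 ≤ -y - 2*n*x ∧
        0 ≤ y + 2*n*z - 1 ∧ 0 ≤ -y - 2*n*z + n) := by
  have hn' : (2 : ℝ) ≤ n := by exact_mod_cast hn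
  constructor
  · have h : 2 * (n : ℝ) * (1 / (2 * n)) = 1 := by field_simp
    refine ⟨0, 0, 1 / (2 * n), ?_, ?_, ?_, ?_⟩ <;> linarith
  · rintro ⟨x, y, z, h1, h2, h3, h4⟩
    have hpos : (0 : ℤ) < 2 * n := by omega
    -- Subtracting the two linear forms gives `1 ≤ 2n(z - x) ≤ 2n - 1`,
    -- so the integer `z - x` would lie strictly between `0` and `1`.
    have hlo : 2 * (n : ℤ) * 0 < 2 * n * (z - x) := by linarith
    have hhi : 2 * (n : ℤ) * (z - x) < 2 * n * 1 := by linarith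
    have h0 : 0 < z - x := lt_of_mul_lt_mul_left hlo hpos.le
    have h5 : z - x < 1 := lt_of_mul_lt_mul_left hhi hpos.le
    omega
end

section
/- For every natural number n ≥ 2: (1) for all integers x, y, if 0 ≤ y + 2nx + n − 1 and 0 ≤ −y − 2nx, then there exists an integer j with 0 ≤ j ≤ n − 1 such that 2n divides y + j; (2) for all integers y, z, if there exists an integer j with 0 ≤ j ≤ n − 1 and 2n dividing y + j, and moreover 0 ≤ y + 2nz − 1 and 0 ≤ −y − 2nz + n, then a contradiction follows. That is, the formula I_n = (2n ∣ y) ∨ (2n ∣ y+1) ∨ ⋯ ∨ (2n ∣ y+n−1) is a separator for A_n ∧ B_n over the integers. -/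
/-- The divisibility disjunction `I_n = (2n ∣ y) ∨ (2n ∣ y+1) ∨ ⋯ ∨ (2n ∣ y+n−1)`
is a separator for `A_n ∧ B_n` over the integers. -/
theorem In_separator (n : ℕ) (hn : 2 ≤ n) :
    (∀ x y : ℤ, 0 ≤ y + 2*n*x + n - 1 → 0 ≤ -y - 2*n*x →
        ∃ j : ℤ, 0 ≤ j ∧ j ≤ (n : ℤ) - 1 ∧ (2*n : ℤ) ∣ (y + j)) ∧
    (∀ y z : ℤ, (∃ j : ℤ, 0 ≤ j ∧ j ≤ (n : ℤ) - 1 ∧ (2*n : ℤ) ∣ (y + j)) →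
        0 ≤ y + 2*n*z - 1 → 0 ≤ -y - 2*n*z + n → False) := by
  refine ⟨fun x y h1 h2 => ⟨-y - 2*n*x, h2, by linarith, -x, by ring⟩, ?_⟩
  rintro y z ⟨j, hj0, hj1, hdvd⟩ h1 h2
  -- `(y + j) + 2nz` is a multiple of `2n` lying strictly between `0` and `2n`
  have hmul : (2*n : ℤ) ∣ y + j + 2*n*z := hdvd.add (dvd_mul_right _ _)
  have hle := Int.le_of_dvd (by linarith) hmul
  linarith
end

section
/- For every natural number n ≥ 1, using Euclidean integer division ediv (where a ediv b for b ≠ 0 is the unique q with a = b·q + r and 0 ≤ r < |b|): (1) for all integers x, y, if 0 ≤ y + 2nx + n − 1 and 0 ≤ −y − 2nx, then 0 ≤ (y + n − 1) ediv (2n) + (−y) ediv (2n); (2) for all integers y, z, if 0 ≤ (y + n − 1) ediv (2n) + (−y) ediv (2n) and 0 ≤ y + 2nz − 1 and 0 ≤ −y − 2nz + n, then a contradiction follows. That is, the inequality 0 ≤ (y+n−1) ediv 2n + (−y) ediv 2n is a separator for A_n ∧ B_n over the integers. -/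
/-- The inequality `0 ≤ (y+n−1) ediv 2n + (−y) ediv 2n` (Euclidean division)
is a separator for `A_n ∧ B_n` over the integers. -/
theorem ediv_separator (n : ℕ) (hn : 1 ≤ n) :
    (∀ x y : ℤ, 0 ≤ y + 2*n*x + n - 1 → 0 ≤ -y - 2*n*x →
        0 ≤ Int.ediv (y + n - 1) (2*n) + Int.ediv (-y) (2*n)) ∧
    (∀ y z : ℤ, 0 ≤ Int.ediv (y + n - 1) (2*n) + Int.ediv (-y) (2*n) →
        0 ≤ y + 2*n*z - 1 → 0 ≤ -y - 2*n*z + n → False) := by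
  have hpos : (0 : ℤ) < 2 * n := by omega
  constructor
  · intro x y h1 h2
    -- `A_n` bounds the two quotients below by `-x` and `x`.
    have h3 : -x ≤ (y + n - 1) / (2 * n) := (Int.le_ediv_iff_mul_le hpos).2 (by linarith)
    have h4 : x ≤ (-y) / (2 * n) := (Int.le_ediv_iff_mul_le hpos).2 (by linarith)
    change 0 ≤ (y + n - 1) / (2 * n : ℤ) + (-y) / (2 * n : ℤ)
    linarith
  · intro y z h h1 h2
    -- `B_n` bounds the two quotients strictly above by `1 - z` and `z`.
    have h3 : (y + n - 1) / (2 * n) < 1 - z := (Int.ediv_lt_iff_lt_mul hpos).2 (by linarith)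
    have h4 : (-y) / (2 * n) < z := (Int.ediv_lt_iff_lt_mul hpos).2 (by linarith)
    change 0 ≤ (y + n - 1) / (2 * n : ℤ) + (-y) / (2 * n : ℤ) at h
    linarith
end

section
/- For every natural number n ≥ 1 and every integer y: 0 ≤ (y + n − 1) ediv (2n) + (−y) ediv (2n) holds if and only if there exists an integer j with 0 ≤ j ≤ n − 1 such that 2n divides y + j. That is, the succinct division-based separator is equivalent to the exponentially larger divisibility disjunction I_n = (2n ∣ y) ∨ (2n ∣ y+1) ∨ ⋯ ∨ (2n ∣ y+n−1). -/
/-- The succinct division-based separator is equivalent to the exponentially larger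
divisibility disjunction `I_n = (2n ∣ y) ∨ (2n ∣ y+1) ∨ ⋯ ∨ (2n ∣ y+n−1)`. -/
theorem ediv_separator_iff_divisibility (n : ℕ) (hn : 1 ≤ n) (y : ℤ) :
    0 ≤ Int.ediv (y + n - 1) (2*n) + Int.ediv (-y) (2*n) ↔
      ∃ j : ℤ, 0 ≤ j ∧ j ≤ (n : ℤ) - 1 ∧ (2*n : ℤ) ∣ (y + j) := by
  change 0 ≤ (y + n - 1) / (2*n : ℤ) + (-y) / (2*n : ℤ) ↔ _
  have hm : (0 : ℤ) < 2 * n := by omega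
  constructor
  · intro h
    -- The witness is the remainder of `-y`: the two remainders and `2n` times the sum of
    -- the quotients add up to `n - 1`, so it is at most `n - 1` when that sum is nonnegative.
    have h1 := Int.mul_ediv_add_emod (y + n - 1) (2*n)
    have h2 := Int.mul_ediv_add_emod (-y) (2*n)
    have h3 := Int.emod_nonneg (y + n - 1) hm.ne'
    have h4 := Int.emod_nonneg (-y) hm.ne'
    have h5 := mul_nonneg hm.le h
    refine ⟨(-y) % (2*n), h4, by linarith, -((-y) / (2*n)), by linarith⟩
  · rintro ⟨j, hj0, hj1, c, hc⟩
    -- With `y + j = 2n * c`, the two quotients are at least `c` and `-c` respectively.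
    have h1 : c ≤ (y + n - 1) / (2*n : ℤ) := by
      rw [Int.le_ediv_iff_mul_le hm]
      linarith
    have h2 : -c ≤ (-y) / (2*n : ℤ) := by
      rw [Int.le_ediv_iff_mul_le hm]
      linarith
    linarith
end
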